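/- Let p, n ≥ 1, let f_1, …, f_n : ℝ^p → ℝ be continuously differentiable with locally Lipschitz gradients, let y ∈ ℝ^n, and define L(θ) = (1/(2n))·Σ_{i=1}^n (y_i − f_i(θ))². Suppose (interpolation) there exists θ̄ with f_i(θ̄) = y_i for all i, so inf L = 0 and the minimizer set Θ* = {θ : f_i(θ) = y_i for all i} is nonempty, and suppose that for every θ ∈ ℝ^p the Gram matrix K(θ)_{ij} = ⟨∇f_i(θ), ∇f_j(θ)⟩ satisfies λ_min(K(θ)) ≥ λ0 > 0. Then L satisfies the QG condition with constant λ0/n: for all θ ∈ ℝ^p, L(θ) ≥ (λ0/(2n))·dist(θ, Θ*)². -/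

import Mathlib

open scoped RealInnerProductSpace

/-!
Under the Gram matrix bound the loss satisfies a Polyak–Łojasiewicz inequality, so the slope of its
square root is bounded below by a constant `κ` wherever the loss is positive. By Ekeland's principle
every `θ` then has, for each `c < κ`, a zero of the loss within distance `√L(θ) / c`: the Ekeland
point cannot be one from which `√L` still descends with slope greater than `c`. Letting `c` tend to
`κ` gives quadratic growth, and the existence of an interpolating parameter along the way.
-/

open Filter Metric Topology

section Ekeland

variable {X : Type*} [MetricSpace X] {φ : X → ℝ} {c : ℝ} {x u : X}

/-- The set of points below `x` in Ekeland's order, for which `w ≤ x` means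
`φ w + c * dist x w ≤ φ x`. -/
def ekelandSet (φ : X → ℝ) (c : ℝ) (x : X) : Set X :=
  {w | φ w + c * dist x w ≤ φ x}

theorem self_mem_ekelandSet : x ∈ ekelandSet φ c x := by
  simp [ekelandSet]

theorem ekelandSet_subset_of_mem (hc : 0 ≤ c) (hu : u ∈ ekelandSet φ c x) :
    ekelandSet φ c u ⊆ ekelandSet φ c x := by
  intro w hw
  have htri : c * dist x w ≤ c * dist x u + c * dist u w := by
    rw [← mul_add]
    exact mul_le_mul_of_nonneg_left (dist_triangle x u w) hc
  change φ w + c * dist x w ≤ φ x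
  have hux : φ u + c * dist x u ≤ φ x := hu
  have hwu : φ w + c * dist u w ≤ φ u := hw
  linarith

theorem isClosed_ekelandSet (hφ : LowerSemicontinuous φ) : IsClosed (ekelandSet φ c x) := by
  have hdist : Continuous fun w => c * dist x w := by fun_prop
  exact (hφ.add hdist.lowerSemicontinuous).isClosed_preimage (φ x)

theorem exists_mem_ekelandSet_forall_mul_dist_le (hc : 0 ≤ c) (hbdd : BddBelow (Set.range φ))
    (x : X) {ε : ℝ} (hε : 0 < ε) :
    ∃ u ∈ ekelandSet φ c x, ∀ w ∈ ekelandSet φ c u, c * dist u w ≤ ε := by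
  obtain ⟨_, ⟨u, hu, rfl⟩, hlt⟩ :=
    Real.lt_sInf_add_pos (s := φ '' ekelandSet φ c x) ⟨φ x, x, self_mem_ekelandSet, rfl⟩ hε
  refine ⟨u, hu, fun w hw => ?_⟩
  have hinf : sInf (φ '' ekelandSet φ c x) ≤ φ w :=
    csInf_le (hbdd.mono (Set.image_subset_range _ _))
      ⟨w, ekelandSet_subset_of_mem hc hu hw, rfl⟩
  have hle : φ w + c * dist u w ≤ φ u := hw
  linarith

theorem exists_seq_ekelandSet (hc : 0 < c) (hbdd : BddBelow (Set.range φ)) (x : X) :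
    ∃ u : ℕ → X, (∀ n, u n ∈ ekelandSet φ c x) ∧ (∀ n, ∀ m ≥ n, u m ∈ ekelandSet φ c (u n)) ∧
      ∀ n, ∀ w ∈ ekelandSet φ c (u n), dist (u n) w ≤ 1 / c * (1 / 2) ^ n := by
  have hpos : ∀ n : ℕ, (0 : ℝ) < (1 / 2) ^ n := fun n => by positivity
  choose next hmem hdist using fun (n : ℕ) (a : X) =>
    exists_mem_ekelandSet_forall_mul_dist_le hc.le hbdd a (hpos n)
  let u : ℕ → X := fun n => Nat.rec (next 0 x) (fun k a => next (k + 1) a) n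
  have hanti : Antitone fun n => ekelandSet φ c (u n) :=
    antitone_nat_of_succ_le fun n => ekelandSet_subset_of_mem hc.le (hmem (n + 1) (u n))
  have hfirst : ekelandSet φ c (u 0) ⊆ ekelandSet φ c x :=
    ekelandSet_subset_of_mem hc.le (hmem 0 x)
  refine ⟨u, fun n => hfirst (hanti n.zero_le self_mem_ekelandSet),
    fun n m hnm => hanti hnm self_mem_ekelandSet, fun n w hw => ?_⟩
  have hle : c * dist (u n) w ≤ (1 / 2) ^ n := by
    cases n with
    | zero => exact hdist 0 x w hw
    | succ k => exact hdist (k + 1) (u k) w hw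
  rwa [one_div_mul_eq_div, le_div_iff₀' hc]

theorem ekeland_variational_principle [CompleteSpace X] (hφ : LowerSemicontinuous φ)
    (hbdd : BddBelow (Set.range φ)) (hc : 0 < c) (x : X) :
    ∃ z, φ z + c * dist x z ≤ φ x ∧ ∀ w ≠ z, φ z < φ w + c * dist z w := by
  obtain ⟨u, hux, hmem, hdist⟩ := exists_seq_ekelandSet hc hbdd x
  obtain ⟨z, hz⟩ := cauchySeq_tendsto_of_complete <|
    cauchySeq_of_le_geometric (1 / 2) (1 / c) one_half_lt_one fun n =>
      hdist n (u (n + 1)) (hmem n (n + 1) n.le_succ)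
  have hzx : z ∈ ekelandSet φ c x := (isClosed_ekelandSet hφ).mem_of_tendsto hz (.of_forall hux)
  have hzu : ∀ n, z ∈ ekelandSet φ c (u n) := fun n =>
    (isClosed_ekelandSet hφ).mem_of_tendsto hz ((eventually_ge_atTop n).mono (hmem n))
  refine ⟨z, hzx, fun w hwz => ?_⟩
  by_contra! hw
  have hbound : ∀ n, dist (u n) w ≤ 1 / c * (1 / 2) ^ n := fun n =>
    hdist n w (ekelandSet_subset_of_mem hc.le (hzu n) hw)
  have hgeom : Tendsto (fun n : ℕ => 1 / c * (1 / 2 : ℝ) ^ n) atTop (𝓝 0) := by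
    simpa using (tendsto_pow_atTop_nhds_zero_of_lt_one one_half_pos.le
      (one_half_lt_one (α := ℝ))).const_mul (1 / c)
  have huw : Tendsto u atTop (𝓝 w) :=
    tendsto_iff_dist_tendsto_zero.2 (squeeze_zero (fun _ => dist_nonneg) hbound hgeom)
  exact hwz (tendsto_nhds_unique huw hz)

theorem exists_eq_and_mul_dist_le_of_descent [CompleteSpace X] {m : ℝ}
    (hφ : LowerSemicontinuous φ) (hm : ∀ x, m ≤ φ x) (hc : 0 < c)
    (hdesc : ∀ x, m < φ x → ∃ w ≠ x, φ w + c * dist x w ≤ φ x) (x : X) :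
    ∃ z, φ z = m ∧ c * dist x z ≤ φ x - m := by
  obtain ⟨z, hzx, hz⟩ := ekeland_variational_principle hφ ⟨m, Set.forall_mem_range.2 hm⟩ hc x
  have hzm : φ z = m := by
    by_contra hne
    obtain ⟨w, hwz, hw⟩ := hdesc z (lt_of_le_of_ne' (hm z) hne)
    exact (hz w hwz).not_ge hw
  exact ⟨z, hzm, by linarith⟩

theorem mul_infDist_le_of_descent [CompleteSpace X] {m κ : ℝ} (hφ : LowerSemicontinuous φ)
    (hm : ∀ x, m ≤ φ x)
    (hdesc : ∀ c, 0 < c → c < κ → ∀ x, m < φ x → ∃ w ≠ x, φ w + c * dist x w ≤ φ x) (x : X) :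
    κ * infDist x {z | φ z = m} ≤ φ x - m := by
  by_contra! hlt
  have hd : 0 < infDist x {z | φ z = m} := infDist_nonneg.lt_of_ne' fun h => by
    rw [h, mul_zero] at hlt
    exact (sub_nonneg.2 (hm x)).not_gt hlt
  obtain ⟨c, hlc, hcκ⟩ := exists_between ((div_lt_iff₀ hd).2 hlt)
  have hc : 0 < c := (div_nonneg (sub_nonneg.2 (hm x)) hd.le).trans_lt hlc
  obtain ⟨z, hz, hxz⟩ := exists_eq_and_mul_dist_le_of_descent hφ hm hc (hdesc c hc hcκ) x
  have hdz : c * infDist x {z | φ z = m} ≤ c * dist x z :=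
    mul_le_mul_of_nonneg_left (infDist_le_dist_of_mem hz) hc.le
  exact (((div_lt_iff₀ hd).1 hlc).trans_le (hdz.trans hxz)).false

end Ekeland

section PolyakLojasiewicz

variable {E : Type*} [NormedAddCommGroup E] [NormedSpace ℝ E]

theorem neg_mul_norm_le_of_forall_le_add_mul_dist {h : E → ℝ} {h' : E →L[ℝ] ℝ} {x : E} {c : ℝ}
    (hh : HasFDerivAt h h' x) (hle : ∀ w, h x ≤ h w + c * dist x w) (v : E) :
    -(c * ‖v‖) ≤ h' v := by
  refine ge_of_tendsto (hh.hasLineDerivAt v).tendsto_slope_zero_right ?_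
  filter_upwards [self_mem_nhdsWithin] with t (ht : 0 < t)
  have hdist : dist x (x + t • v) = t * ‖v‖ := by
    rw [dist_self_add_right, norm_smul, Real.norm_of_nonneg ht.le]
  have hxt := hle (x + t • v)
  rw [hdist] at hxt
  rw [smul_eq_mul, inv_mul_eq_div, le_div_iff₀ ht]
  linarith

theorem exists_add_mul_dist_lt_of_lt_norm {h : E → ℝ} {h' : E →L[ℝ] ℝ} {x : E} {c : ℝ}
    (hh : HasFDerivAt h h' x) (hc : 0 ≤ c) (hlt : c < ‖h'‖) :
    ∃ w, h w + c * dist x w < h x := by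
  by_contra! hle
  refine hlt.not_ge (h'.opNorm_le_bound hc fun v => abs_le.2 ⟨?_, ?_⟩)
  · exact neg_mul_norm_le_of_forall_le_add_mul_dist hh hle v
  · simpa using neg_mul_norm_le_of_forall_le_add_mul_dist hh hle (-v)

variable {g : E → ℝ} {m μ : ℝ}

theorem exists_sqrt_sub_descent_of_pl {x : E} {c : ℝ} (hg : DifferentiableAt ℝ g x)
    (hpl : 2 * μ * (g x - m) ≤ ‖fderiv ℝ g x‖ ^ 2) (hx : m < g x) (hc : 0 ≤ c)
    (hcμ : c < √(μ / 2)) :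
    ∃ w ≠ x, √(g w - m) + c * dist x w ≤ √(g x - m) := by
  have hgap : 0 < g x - m := sub_pos.2 hx
  have hderiv := (hg.hasFDerivAt.sub_const m).sqrt hgap.ne'
  have hnorm : √(μ / 2) ≤ ‖(1 / (2 * √(g x - m))) • fderiv ℝ g x‖ := by
    refine Real.sqrt_le_iff.2 ⟨norm_nonneg _, ?_⟩
    rw [norm_smul, mul_pow, Real.norm_eq_abs, sq_abs, div_pow, mul_pow, Real.sq_sqrt hgap.le,
      one_pow, one_div_mul_eq_div, le_div_iff₀ (by positivity)]
    linarith
  obtain ⟨w, hw⟩ := exists_add_mul_dist_lt_of_lt_norm hderiv hc (hcμ.trans_le hnorm)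
  refine ⟨w, ?_, hw.le⟩
  rintro rfl
  simp at hw

theorem nonempty_setOf_eq_of_pl [CompleteSpace E] (hg : Differentiable ℝ g) (hm : ∀ x, m ≤ g x)
    (hμ : 0 < μ) (hpl : ∀ x, 2 * μ * (g x - m) ≤ ‖fderiv ℝ g x‖ ^ 2) :
    {z | g z = m}.Nonempty := by
  have hκ : 0 < √(μ / 2) := Real.sqrt_pos.2 (half_pos hμ)
  have hcont : Continuous fun x => √(g x - m) := (hg.continuous.sub continuous_const).sqrt
  obtain ⟨z, hz, -⟩ := exists_eq_and_mul_dist_le_of_descent hcont.lowerSemicontinuous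
    (fun x => Real.sqrt_nonneg (g x - m)) (half_pos hκ)
    (fun x hx => exists_sqrt_sub_descent_of_pl (hg x) (hpl x)
      (sub_pos.1 (Real.sqrt_pos.1 hx)) (half_pos hκ).le (half_lt_self hκ)) 0
  exact ⟨z, (sub_nonpos.1 (Real.sqrt_eq_zero'.1 hz)).antisymm (hm z)⟩

theorem quadratic_growth_of_pl [CompleteSpace E] (hg : Differentiable ℝ g) (hm : ∀ x, m ≤ g x)
    (hμ : 0 ≤ μ) (hpl : ∀ x, 2 * μ * (g x - m) ≤ ‖fderiv ℝ g x‖ ^ 2) (x : E) :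
    μ / 2 * infDist x {z | g z = m} ^ 2 ≤ g x - m := by
  have hcont : Continuous fun x => √(g x - m) := (hg.continuous.sub continuous_const).sqrt
  have hzero : {z | √(g z - m) = 0} = {z | g z = m} := Set.ext fun z =>
    (Real.sqrt_eq_zero (sub_nonneg.2 (hm z))).trans sub_eq_zero
  have hle : √(μ / 2) * infDist x {z | g z = m} ≤ √(g x - m) := by
    simpa only [hzero, sub_zero] using mul_infDist_le_of_descent hcont.lowerSemicontinuous
      (fun x => Real.sqrt_nonneg (g x - m)) (fun c hc hcμ x hx =>
        exists_sqrt_sub_descent_of_pl (hg x) (hpl x) (sub_pos.1 (Real.sqrt_pos.1 hx)) hc.le hcμ) x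
  calc μ / 2 * infDist x {z | g z = m} ^ 2
      = (√(μ / 2) * infDist x {z | g z = m}) ^ 2 := by
        rw [mul_pow, Real.sq_sqrt (div_nonneg hμ zero_le_two)]
    _ ≤ √(g x - m) ^ 2 := pow_le_pow_left₀ (mul_nonneg (Real.sqrt_nonneg _) infDist_nonneg) hle 2
    _ = g x - m := Real.sq_sqrt (sub_nonneg.2 (hm x))

end PolyakLojasiewicz

section SquaredLoss

variable {E ι : Type*} [Fintype ι]

/-- The empirical squared loss `L(θ) = (1 / 2n) ∑ i, (y i - f i θ) ^ 2` of the predictors `f` on the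
labels `y`, where `n` is the number of samples. -/
noncomputable def squaredLoss (f : ι → E → ℝ) (y : ι → ℝ) (θ : E) : ℝ :=
  1 / (2 * (Fintype.card ι : ℝ)) * ∑ i, (y i - f i θ) ^ 2

theorem squaredLoss_nonneg (f : ι → E → ℝ) (y : ι → ℝ) (θ : E) : 0 ≤ squaredLoss f y θ := by
  unfold squaredLoss
  positivity

theorem squaredLoss_eq_zero_iff [Nonempty ι] {f : ι → E → ℝ} {y : ι → ℝ} {θ : E} :
    squaredLoss f y θ = 0 ↔ ∀ i, f i θ = y i := by
  have hweight : 1 / (2 * (Fintype.card ι : ℝ)) ≠ 0 := by positivity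
  rw [squaredLoss, mul_eq_zero_iff_left hweight,
    Finset.sum_eq_zero_iff_of_nonneg fun i _ => sq_nonneg (y i - f i θ)]
  simp only [Finset.mem_univ, forall_const, sq_eq_zero_iff, sub_eq_zero, eq_comm]

variable [NormedAddCommGroup E] [InnerProductSpace ℝ E]

theorem norm_sum_smul_sq (v : ι → ℝ) (a : ι → E) :
    ‖∑ i, v i • a i‖ ^ 2 = ∑ i, ∑ j, v i * v j * ⟪a i, a j⟫ := by
  rw [← real_inner_self_eq_norm_sq, sum_inner]
  simp only [inner_sum, real_inner_smul_left, real_inner_smul_right, mul_assoc]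
  exact Finset.sum_congr rfl fun i _ => Finset.sum_congr rfl fun j _ => mul_left_comm _ _ _

variable [CompleteSpace E] {f : ι → E → ℝ} {θ : E}

theorem hasGradientAt_squaredLoss (hf : ∀ i, DifferentiableAt ℝ (f i) θ) (y : ι → ℝ) :
    HasGradientAt (squaredLoss f y)
      (-(1 / (Fintype.card ι : ℝ)) • ∑ i, (y i - f i θ) • gradient (f i) θ) θ := by
  have hterm : ∀ i, HasFDerivAt (fun θ => (y i - f i θ) ^ 2) _ θ := fun i =>
    ((hf i).hasFDerivAt.const_sub (y i)).pow 2
  have hsum := (HasFDerivAt.fun_sum fun i (_ : i ∈ Finset.univ) => hterm i).const_mul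
    (1 / (2 * (Fintype.card ι : ℝ)))
  refine hasGradientAt_iff_hasFDerivAt.2 (hsum.congr_fderiv ?_)
  simp only [map_smul, map_sum, toDual_gradient, Finset.smul_sum]
  refine Finset.sum_congr rfl fun i _ => ?_
  module

theorem pl_squaredLoss {lam0 : ℝ} (hf : ∀ i, DifferentiableAt ℝ (f i) θ) (y : ι → ℝ)
    (hgram : ∀ v : ι → ℝ, lam0 * ∑ i, v i ^ 2
      ≤ ∑ i, ∑ j, v i * v j * ⟪gradient (f i) θ, gradient (f j) θ⟫) :
    2 * (lam0 / (Fintype.card ι : ℝ)) * squaredLoss f y θ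
      ≤ ‖fderiv ℝ (squaredLoss f y) θ‖ ^ 2 := by
  set n : ℝ := (Fintype.card ι : ℝ) with hn
  have hgrad := (hasGradientAt_squaredLoss hf y).hasFDerivAt.fderiv
  calc 2 * (lam0 / n) * squaredLoss f y θ
      = (1 / n) ^ 2 * (lam0 * ∑ i, (y i - f i θ) ^ 2) := by
        rw [squaredLoss, ← hn]
        ring
    _ ≤ (1 / n) ^ 2 * ‖∑ i, (y i - f i θ) • gradient (f i) θ‖ ^ 2 := by
        rw [norm_sum_smul_sq]
        exact mul_le_mul_of_nonneg_left (hgram _) (sq_nonneg _)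
    _ = ‖fderiv ℝ (squaredLoss f y) θ‖ ^ 2 := by
        rw [hgrad, LinearIsometryEquiv.norm_map, norm_smul, mul_pow, norm_neg, Real.norm_eq_abs,
          sq_abs]

end SquaredLoss

theorem squared_loss_qg_general {E ι : Type*} [NormedAddCommGroup E] [InnerProductSpace ℝ E]
    [CompleteSpace E] [Fintype ι] [Nonempty ι] {f : ι → E → ℝ} (hf : ∀ i, Differentiable ℝ (f i))
    (y : ι → ℝ) {lam0 : ℝ} (hlam0 : 0 < lam0)
    (hNTK : ∀ θ : E, ∀ v : ι → ℝ, lam0 * ∑ i, v i ^ 2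
      ≤ ∑ i, ∑ j, v i * v j * ⟪gradient (f i) θ, gradient (f j) θ⟫) :
    {θ | ∀ i, f i θ = y i}.Nonempty ∧ ∀ θ, squaredLoss f y θ ≥
      lam0 / (2 * (Fintype.card ι : ℝ)) * infDist θ {θ' | ∀ i, f i θ' = y i} ^ 2 := by
  have hμ : 0 < lam0 / (Fintype.card ι : ℝ) := by positivity
  have hdiff : Differentiable ℝ (squaredLoss f y) := fun θ =>
    (hasGradientAt_squaredLoss (fun i => hf i θ) y).differentiableAt
  have hpl : ∀ θ, 2 * (lam0 / (Fintype.card ι : ℝ)) * (squaredLoss f y θ - 0)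
      ≤ ‖fderiv ℝ (squaredLoss f y) θ‖ ^ 2 := fun θ => by
    simpa only [sub_zero] using pl_squaredLoss (fun i => hf i θ) y (hNTK θ)
  have hnonneg := squaredLoss_nonneg f y
  have hΘ : {θ | squaredLoss f y θ = 0} = {θ | ∀ i, f i θ = y i} :=
    Set.ext fun θ => squaredLoss_eq_zero_iff
  rw [← hΘ]
  refine ⟨nonempty_setOf_eq_of_pl hdiff hnonneg hμ hpl, fun θ => ?_⟩
  have hqg := quadratic_growth_of_pl hdiff hnonneg hμ.le hpl θ
  rwa [sub_zero, div_div, mul_comm (Fintype.card ι : ℝ)] at hqg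

/-- **QG condition for the squared loss under interpolation and the NTK condition.**
If the predictors interpolate the labels at some point (so the minimizer set
`Θ* = {θ | ∀ i, f_i(θ) = y_i}` is nonempty and `inf L = 0`) and the Gram (NTK) matrix
has smallest eigenvalue at least `lam0 > 0` everywhere (stated via its quadratic form),
then the empirical squared loss `L(θ) = (1/(2n)) Σ (y_i - f_i(θ))²` satisfies quadratic
growth with constant `lam0/n`: `L(θ) ≥ (lam0/(2n)) · dist(θ, Θ*)²`. -/
theorem squared_loss_qg (p n : ℕ) (hp : 1 ≤ p) (hn : 1 ≤ n)
    (f : Fin n → EuclideanSpace ℝ (Fin p) → ℝ)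
    (hf : ∀ i, ContDiff ℝ 1 (f i))
    (hfgradLip : ∀ i, LocallyLipschitz (gradient (f i)))
    (y : Fin n → ℝ)
    (L : EuclideanSpace ℝ (Fin p) → ℝ)
    (hL : L = fun θ => (1 / (2 * (n : ℝ))) * ∑ i, (y i - f i θ) ^ 2)
    (hinterp : ∃ θbar, ∀ i, f i θbar = y i)
    (lam0 : ℝ) (hlam0 : 0 < lam0)
    (hNTK : ∀ θ : EuclideanSpace ℝ (Fin p), ∀ v : Fin n → ℝ,
      lam0 * ∑ i, v i ^ 2
        ≤ ∑ i, ∑ j, v i * v j * ⟪gradient (f i) θ, gradient (f j) θ⟫) :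
    ∀ θ, L θ ≥ (lam0 / (2 * (n : ℝ)))
      * (Metric.infDist θ {θ' | ∀ i, f i θ' = y i}) ^ 2 := by
  have : Nonempty (Fin n) := ⟨⟨0, hn⟩⟩
  simpa only [hL, squaredLoss, Fintype.card_fin] using
    (squared_loss_qg_general (fun i => (hf i).differentiable one_ne_zero) y hlam0 hNTK).2
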